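/- arXiv:2307.01127 — 3 statements merged into one kernel-verified Lean document; each statement's English description precedes it below -/
import Mathlib

section
/- For every δ with 0 < δ < e^{-3/2}, one has F₁'(s)·s / F₁(s) > 1 for every s > 0, and F₁'(s)·s / F₁(s) → 2 as s → +∞, where F₁' denotes the derivative of F₁. -/
open Filter Topology

noncomputable def F1 (δ s : ℝ) : ℝ :=
  if |s| < δ then -(1/2) * s^2 * Real.log (s^2)
  else -(1/2) * s^2 * (Real.log (δ^2) + 3) + 2*δ*|s| - (1/2)*δ^2

/-
For `s > 0` the inequality `F₁'(s) s / F₁(s) > 1` means `0 < F₁(s) < F₁'(s) s`. Put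
`c = -(log δ + 3/2) > 0`. Then `F₁(s)` is `-s² log s` for `s ≤ δ` and `c s² + 2δs - δ²/2` for
`s ≥ δ`, while `F₁'(s) s - F₁(s)` is `-s² (log s + 1)` and `c s² + δ²/2` respectively. The limit
holds because `P'(s) s / P(s) → deg P` for every polynomial `P`, and `F₁` agrees on `[δ, ∞)` with a
polynomial of degree `2`.
-/

theorem tendsto_eval_derivative_mul_div_eval {𝕜 : Type*} [NormedField 𝕜] [LinearOrder 𝕜]
    [IsStrictOrderedRing 𝕜] [OrderTopology 𝕜] (P : Polynomial 𝕜) :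
    Tendsto (fun x : 𝕜 => P.derivative.eval x * x / P.eval x) atTop (𝓝 P.natDegree) := by
  rcases eq_or_ne P.natDegree 0 with hdeg | hdeg
  · simp [Polynomial.derivative_of_natDegree_zero hdeg, hdeg]
  · have hP : P ≠ 0 := Polynomial.ne_zero_of_natDegree_gt (Nat.pos_of_ne_zero hdeg)
    have hdegree : (P.derivative * Polynomial.X).degree = P.degree := by
      rw [Polynomial.degree_mul_X, Polynomial.degree_derivative hdeg,
        Polynomial.degree_eq_natDegree hP]
      exact_mod_cast Nat.sub_add_cancel (Nat.one_le_iff_ne_zero.mpr hdeg)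
    have hlead : (P.derivative * Polynomial.X).leadingCoeff / P.leadingCoeff = P.natDegree := by
      rw [Polynomial.leadingCoeff_mul_X, Polynomial.leadingCoeff_derivative,
        mul_div_cancel_left₀ _ (Polynomial.leadingCoeff_ne_zero.mpr hP)]
    simpa only [Polynomial.eval_mul_X, hlead] using
      Polynomial.div_tendsto_atTop_leadingCoeff_div_of_degree_eq _ P hdegree

theorem hasDerivAt_of_eventuallyEq_nhdsLE_of_eventuallyEq_nhdsGE {𝕜 E : Type*}
    [NontriviallyNormedField 𝕜] [LinearOrder 𝕜] [NormedAddCommGroup E] [NormedSpace 𝕜 E]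
    {f g h : 𝕜 → E} {f' : E} {a : 𝕜} (hg : HasDerivWithinAt g f' (Set.Iic a) a)
    (hh : HasDerivWithinAt h f' (Set.Ici a) a) (hfg : f =ᶠ[𝓝[≤] a] g) (hfh : f =ᶠ[𝓝[≥] a] h) :
    HasDerivAt f f' a := by
  have hleft : HasDerivWithinAt f f' (Set.Iic a) a :=
    hg.congr_of_eventuallyEq_of_mem hfg Set.self_mem_Iic
  have hright : HasDerivWithinAt f f' (Set.Ici a) a :=
    hh.congr_of_eventuallyEq_of_mem hfh Set.self_mem_Ici
  simpa only [Set.Iic_union_Ici, hasDerivWithinAt_univ] using hleft.union hright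

theorem hasDerivAt_neg_sq_mul_log {s : ℝ} (hs : s ≠ 0) :
    HasDerivAt (fun x : ℝ => -(x ^ 2 * Real.log x)) (-(2 * Real.log s + 1) * s) s := by
  refine ((hasDerivAt_pow 2 s).mul (Real.hasDerivAt_log hs)).neg.congr_deriv ?_
  push_cast
  field_simp

/-- The quadratic polynomial in `|s|` that continues `F1 δ` beyond the threshold `|s| = δ`. -/
noncomputable def F1Tail (δ : ℝ) : Polynomial ℝ :=
  .C (-(Real.log δ + 3 / 2)) * .X ^ 2 + .C (2 * δ) * .X + .C (-(δ ^ 2 / 2))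

theorem eval_F1Tail (δ s : ℝ) :
    (F1Tail δ).eval s = -(Real.log δ + 3 / 2) * s ^ 2 + 2 * δ * s - δ ^ 2 / 2 := by
  simp [F1Tail, sub_eq_add_neg]

theorem eval_derivative_F1Tail (δ s : ℝ) :
    (F1Tail δ).derivative.eval s = -(2 * Real.log δ + 3) * s + 2 * δ := by
  simp only [F1Tail, Polynomial.derivative_add, Polynomial.derivative_C_mul,
    Polynomial.derivative_X_sq, Polynomial.derivative_X, Polynomial.derivative_C,
    Polynomial.eval_add, Polynomial.eval_mul, Polynomial.eval_C, Polynomial.eval_X,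
    Polynomial.eval_one, Polynomial.eval_zero]
  ring

section F1

variable {δ s : ℝ}

theorem natDegree_F1Tail (hlog : Real.log δ ≠ -(3 / 2)) : (F1Tail δ).natDegree = 2 :=
  Polynomial.natDegree_quadratic fun hcoeff => hlog (by linarith)

theorem F1_of_le_abs (h : δ ≤ |s|) : F1 δ s = (F1Tail δ).eval |s| := by
  rw [F1, if_neg h.not_gt, eval_F1Tail, sq_abs, Real.log_pow]
  push_cast
  ring

theorem F1_of_abs_le (h : |s| ≤ δ) : F1 δ s = -(s ^ 2 * Real.log s) := by
  rcases h.lt_or_eq with hlt | rfl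
  · rw [F1, if_pos hlt, Real.log_pow]
    push_cast
    ring
  · rw [F1_of_le_abs le_rfl, eval_F1Tail, Real.log_abs, sq_abs]
    linear_combination 2 * abs_mul_abs_self s

theorem hasDerivAt_F1_of_lt (hs : 0 < s) (h : s < δ) :
    HasDerivAt (F1 δ) (-(2 * Real.log s + 1) * s) s := by
  refine (hasDerivAt_neg_sq_mul_log hs.ne').congr_of_eventuallyEq ?_
  filter_upwards [Ioo_mem_nhds hs h] with x hx
  exact F1_of_abs_le ((abs_of_pos hx.1).trans_le hx.2.le)

theorem hasDerivAt_F1_of_le (hδ : 0 < δ) (h : δ ≤ s) :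
    HasDerivAt (F1 δ) ((F1Tail δ).derivative.eval s) s := by
  have eq_tail {x : ℝ} (hx : δ ≤ x) : F1 δ x = (F1Tail δ).eval x := by
    have habs : |x| = x := abs_of_pos (hδ.trans_le hx)
    rw [F1_of_le_abs (hx.trans_eq habs.symm), habs]
  rcases h.lt_or_eq with hlt | rfl
  · refine ((F1Tail δ).hasDerivAt s).congr_of_eventuallyEq ?_
    filter_upwards [Ioi_mem_nhds hlt] with x hx using eq_tail (le_of_lt hx)
  · have deriv_eq : -(2 * Real.log δ + 1) * δ = (F1Tail δ).derivative.eval δ := by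
      rw [eval_derivative_F1Tail]
      ring
    refine hasDerivAt_of_eventuallyEq_nhdsLE_of_eventuallyEq_nhdsGE
      ((hasDerivAt_neg_sq_mul_log hδ.ne').congr_deriv deriv_eq).hasDerivWithinAt
      ((F1Tail δ).hasDerivWithinAt δ (Set.Ici δ)) ?_ ?_
    · filter_upwards [Ioc_mem_nhdsLE hδ] with x hx
      exact F1_of_abs_le ((abs_of_pos hx.1).trans_le hx.2)
    · filter_upwards [self_mem_nhdsWithin] with x hx using eq_tail hx

theorem F1_pos (hδ : 0 < δ) (hlog : Real.log δ ≤ -(3 / 2)) (hs : s ≠ 0) : 0 < F1 δ s := by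
  have hs_abs : 0 < |s| := abs_pos.mpr hs
  rcases le_total |s| δ with h | h
  · have hlog_neg : Real.log s < 0 := by
      rw [← Real.log_abs]
      linarith [Real.log_le_log hs_abs h]
    rw [F1_of_abs_le h, neg_pos]
    exact mul_neg_of_pos_of_neg (by positivity) hlog_neg
  · have hquad : 0 ≤ -(Real.log δ + 3 / 2) * |s| ^ 2 := mul_nonneg (by linarith) (by positivity)
    have hlin : δ * δ ≤ δ * |s| := by gcongr
    have hδ_sq : 0 < δ * δ := by positivity
    rw [F1_of_le_abs h, eval_F1Tail]
    linarith

theorem F1_lt_deriv_mul (hδ : 0 < δ) (hlog : Real.log δ ≤ -(3 / 2)) (hs : 0 < s) :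
    F1 δ s < deriv (F1 δ) s * s := by
  have habs : |s| = s := abs_of_pos hs
  rw [← sub_pos]
  rcases lt_or_ge s δ with h | h
  · have hlog_s : Real.log s + 1 < 0 := by linarith [Real.log_le_log hs h.le]
    calc
      0 < s ^ 2 * -(Real.log s + 1) := mul_pos (by positivity) (by linarith)
      _ = deriv (F1 δ) s * s - F1 δ s := by
        rw [(hasDerivAt_F1_of_lt hs h).deriv, F1_of_abs_le (habs.trans_le h.le)]
        ring
  · have hcoeff : 0 ≤ -(Real.log δ + 3 / 2) := by linarith
    calc
      0 < -(Real.log δ + 3 / 2) * s ^ 2 + δ ^ 2 / 2 := by positivity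
      _ = deriv (F1 δ) s * s - F1 δ s := by
        rw [(hasDerivAt_F1_of_le hδ h).deriv, F1_of_le_abs (h.trans_eq habs.symm), habs,
          eval_derivative_F1Tail, eval_F1Tail]
        ring

theorem tendsto_deriv_F1_mul_div_F1 (hδ : 0 < δ) (hlog : Real.log δ ≠ -(3 / 2)) :
    Tendsto (fun s : ℝ => deriv (F1 δ) s * s / F1 δ s) atTop (𝓝 2) := by
  have htail := tendsto_eval_derivative_mul_div_eval (F1Tail δ)
  rw [natDegree_F1Tail hlog, Nat.cast_ofNat] at htail
  refine htail.congr' ?_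
  filter_upwards [eventually_ge_atTop δ] with s h
  have habs : |s| = s := abs_of_pos (hδ.trans_le h)
  rw [(hasDerivAt_F1_of_le hδ h).deriv, F1_of_le_abs (h.trans_eq habs.symm), habs]

end F1

theorem stmt5 (δ : ℝ) (hδ : 0 < δ) (hδ' : δ < Real.exp (-(3/2))) :
    (∀ s : ℝ, 0 < s → 1 < deriv (F1 δ) s * s / F1 δ s) ∧
    Tendsto (fun s : ℝ => deriv (F1 δ) s * s / F1 δ s) atTop (𝓝 2) := by
  have hlog : Real.log δ < -(3 / 2) := (Real.log_lt_iff_lt_exp hδ).mpr hδ'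
  refine ⟨fun s hs => ?_, tendsto_deriv_F1_mul_div_F1 hδ hlog.ne⟩
  exact (one_lt_div (F1_pos hδ hlog.le hs.ne')).mpr (F1_lt_deriv_mul hδ hlog.le hs)
end

section
/- For every δ with 0 < δ < e^{-3/2} and every s ∈ ℝ, one has 0 ≤ F₁(s) ≤ F₁'(s)·s, where F₁' denotes the derivative of F₁. -/
open Real

section Calculus

variable {𝕜 F : Type*} [NontriviallyNormedField 𝕜] [NormedAddCommGroup F] [NormedSpace 𝕜 F]

theorem hasDerivAt_of_forall_eq_or_eq {f g h : 𝕜 → F} {f' : F} {x : 𝕜}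
    (hf : HasDerivAt f f' x) (hg : HasDerivAt g f' x) (hfg : f x = g x)
    (h_or : ∀ y, h y = f y ∨ h y = g y) : HasDerivAt h f' x := by
  have hx : h x = f x := (h_or x).elim id fun hgx ↦ hgx.trans hfg.symm
  have h_on_f : HasDerivWithinAt h f' {y | h y = f y} x :=
    hf.hasDerivWithinAt.congr (fun _ hy ↦ hy) hx
  have h_on_g : HasDerivWithinAt h f' {y | h y = g y} x :=
    hg.hasDerivWithinAt.congr (fun _ hy ↦ hy) (hx.trans hfg)
  have h_cover : {y | h y = f y} ∪ {y | h y = g y} = Set.univ := Set.eq_univ_of_forall h_or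
  simpa only [h_cover, hasDerivWithinAt_univ] using h_on_f.union h_on_g

theorem hasDerivAt_id_smul_zero_of_continuousAt {f : 𝕜 → F} (hf : ContinuousAt f 0) :
    HasDerivAt (fun x ↦ x • f x) (f 0) 0 := by
  rw [hasDerivAt_iff_tendsto_slope_zero]
  refine (hf.tendsto.mono_left nhdsWithin_le_nhds).congr' ?_
  filter_upwards [self_mem_nhdsWithin] with t (ht : t ≠ 0)
  simp [ht]

end Calculus

theorem hasDerivAt_neg_half_sq_mul_log_sq (s : ℝ) :
    HasDerivAt (fun x ↦ -(1 / 2) * x ^ 2 * log (x ^ 2)) (-(log (s ^ 2) + 1) * s) s := by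
  have h_eq : (fun x ↦ -(1 / 2) * x ^ 2 * log (x ^ 2)) = fun x ↦ x • negMulLog x := by
    ext x
    rw [log_pow, negMulLog, smul_eq_mul]
    push_cast
    ring
  rw [h_eq]
  rcases eq_or_ne s 0 with rfl | hs
  · simpa using hasDerivAt_id_smul_zero_of_continuousAt continuous_negMulLog.continuousAt
  · refine ((hasDerivAt_id s).smul (hasDerivAt_negMulLog hs)).congr_deriv ?_
    rw [log_pow, negMulLog, id, smul_eq_mul, smul_eq_mul]
    push_cast
    ring

theorem hasDerivAt_quadratic_abs (a b c : ℝ) {s : ℝ} (hs : s ≠ 0) :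
    HasDerivAt (fun x ↦ -(1 / 2) * x ^ 2 * a + b * |x| - c)
      (-a * s + b * SignType.sign s) s := by
  refine (((((hasDerivAt_pow 2 s).const_mul (-(1 / 2))).mul_const a).add
    ((hasDerivAt_abs hs).const_mul b)).sub_const c).congr_deriv ?_
  push_cast
  ring

variable {δ s : ℝ}

theorem F1_of_abs_lt (h : |s| < δ) : F1 δ s = -(1 / 2) * s ^ 2 * log (s ^ 2) := if_pos h

theorem F1_of_le_abs_s8 (h : δ ≤ |s|) :
    F1 δ s = -(1 / 2) * s ^ 2 * (log (δ ^ 2) + 3) + 2 * δ * |s| - 1 / 2 * δ ^ 2 :=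
  if_neg h.not_gt

theorem hasDerivAt_F1_of_abs_lt (h : |s| < δ) :
    HasDerivAt (F1 δ) (-(log (s ^ 2) + 1) * s) s := by
  refine (hasDerivAt_neg_half_sq_mul_log_sq s).congr_of_eventuallyEq ?_
  filter_upwards [continuous_abs.continuousAt.eventually_lt_const h] with x hx
  exact F1_of_abs_lt hx

theorem hasDerivAt_F1_of_le_abs (hδ : 0 < δ) (h : δ ≤ |s|) :
    HasDerivAt (F1 δ) (-(log (δ ^ 2) + 3) * s + 2 * δ * SignType.sign s) s := by
  have hs : s ≠ 0 := abs_pos.mp (hδ.trans_le h)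
  have h_outer := hasDerivAt_quadratic_abs (log (δ ^ 2) + 3) (2 * δ) (1 / 2 * δ ^ 2) hs
  rcases h.lt_or_eq with h_lt | rfl
  · refine h_outer.congr_of_eventuallyEq ?_
    filter_upwards [continuous_abs.continuousAt.eventually_const_lt h_lt] with x hx
    exact F1_of_le_abs_s8 hx.le
  · have h_inner : HasDerivAt (fun x ↦ -(1 / 2) * x ^ 2 * log (x ^ 2))
        (-(log (|s| ^ 2) + 3) * s + 2 * |s| * SignType.sign s) s := by
      refine (hasDerivAt_neg_half_sq_mul_log_sq s).congr_deriv ?_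
      rw [sq_abs]
      linear_combination (-2) * abs_mul_sign s
    have h_value : -(1 / 2) * s ^ 2 * log (s ^ 2) =
        -(1 / 2) * s ^ 2 * (log (|s| ^ 2) + 3) + 2 * |s| * |s| - 1 / 2 * |s| ^ 2 := by
      rw [mul_assoc 2, abs_mul_abs_self, sq_abs]
      ring
    exact hasDerivAt_of_forall_eq_or_eq h_inner h_outer h_value fun y ↦
      (lt_or_ge |y| |s|).imp F1_of_abs_lt F1_of_le_abs_s8

theorem log_sq_add_three_nonpos (hs : 0 < s) (h : s ≤ exp (-(3 / 2))) :
    log (s ^ 2) + 3 ≤ 0 := by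
  have h_log : log s ≤ -(3 / 2) := (log_le_iff_le_exp hs).mpr h
  rw [log_pow]
  push_cast
  linarith

theorem sq_mul_log_sq_add_three_nonpos (h : |s| ≤ exp (-(3 / 2))) :
    s ^ 2 * (log (s ^ 2) + 3) ≤ 0 := by
  rcases eq_or_ne s 0 with rfl | hs
  · simp
  · rw [← sq_abs]
    exact mul_nonpos_of_nonneg_of_nonpos (sq_nonneg |s|)
      (log_sq_add_three_nonpos (abs_pos.mpr hs) h)

theorem F1_nonneg (hδ : 0 < δ) (hδ' : δ ≤ exp (-(3 / 2))) (s : ℝ) : 0 ≤ F1 δ s := by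
  rcases lt_or_ge |s| δ with h | h
  · rw [F1_of_abs_lt h]
    linarith [sq_mul_log_sq_add_three_nonpos (h.le.trans hδ'), sq_nonneg s]
  · rw [F1_of_le_abs_s8 h]
    have h_quadratic : s ^ 2 * (log (δ ^ 2) + 3) ≤ 0 :=
      mul_nonpos_of_nonneg_of_nonpos (sq_nonneg s) (log_sq_add_three_nonpos hδ hδ')
    have h_linear : δ * δ ≤ δ * |s| := by gcongr
    linarith [sq_nonneg δ, sq δ]

theorem F1_le_deriv_mul_self (hδ : 0 < δ) (hδ' : δ ≤ exp (-(3 / 2))) (s : ℝ) :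
    F1 δ s ≤ deriv (F1 δ) s * s := by
  rcases lt_or_ge |s| δ with h | h
  · rw [F1_of_abs_lt h, (hasDerivAt_F1_of_abs_lt h).deriv]
    linarith [sq_mul_log_sq_add_three_nonpos (h.le.trans hδ'), sq_nonneg s]
  · rw [F1_of_le_abs_s8 h, (hasDerivAt_F1_of_le_abs hδ h).deriv]
    have h_quadratic : s ^ 2 * (log (δ ^ 2) + 3) ≤ 0 :=
      mul_nonpos_of_nonneg_of_nonpos (sq_nonneg s) (log_sq_add_three_nonpos hδ hδ')
    have h_sign : 2 * δ * SignType.sign s * s = 2 * δ * |s| := by rw [mul_assoc, sign_mul_self]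
    linarith [sq_nonneg δ]

theorem stmt8 (δ : ℝ) (hδ : 0 < δ) (hδ' : δ < Real.exp (-(3/2))) (s : ℝ) :
    0 ≤ F1 δ s ∧ F1 δ s ≤ deriv (F1 δ) s * s :=
  ⟨F1_nonneg hδ hδ'.le s, F1_le_deriv_mul_self hδ hδ'.le s⟩
end

section
/- For every δ > 0, the derivatives of F₁ and F₂ satisfy F₂'(s) - F₁'(s) = s·log(s²) + s for every s ≠ 0, and F₂'(0) = F₁'(0) = 0. -/
noncomputable def F2 (δ s : ℝ) : ℝ :=
  if |s| ≤ δ then 0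
  else (1/2) * s^2 * Real.log (s^2/δ^2) + 2*δ*|s| - (3/2)*s^2 - (1/2)*δ^2

/-!
At the gluing points `|s| = δ` the outer branch of `F2` vanishes together with its derivative, so
it glues differentiably to the inner branch `0`. The branches are chosen so that `F2 - F1` is the
single function `s² log (s²) / 2`, whose derivative `s log (s²) + s` extends continuously to
`s = 0`; hence `F1` is differentiable as well.
-/

lemma hasDerivAt_ite {𝕜 E : Type*} [NontriviallyNormedField 𝕜] [NormedAddCommGroup E]
    [NormedSpace 𝕜 E] {f g : 𝕜 → E} {f' : E} {x : 𝕜} (p : 𝕜 → Prop) [DecidablePred p]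
    (hf : HasDerivAt f f' x) (hg : HasDerivAt g f' x) (hfg : f x = g x) :
    HasDerivAt (fun y ↦ if p y then f y else g y) f' x := by
  rw [← hasDerivWithinAt_univ, ← Set.union_compl_self {y | p y}]
  refine HasDerivWithinAt.union ?_ ?_
  · exact hf.hasDerivWithinAt.congr (fun y hy ↦ if_pos hy) (by simp [hfg])
  · exact hg.hasDerivWithinAt.congr (fun y hy ↦ if_neg hy) (by simp [hfg])

lemma hasDerivAt_half_sq_mul_log_sq (s : ℝ) :
    HasDerivAt (fun t ↦ 1 / 2 * t ^ 2 * Real.log (t ^ 2)) (s * Real.log (s ^ 2) + s) s := by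
  have hcont : Continuous fun t : ℝ ↦ t * Real.log (t ^ 2) := by
    simpa [mul_left_comm] using Real.continuous_mul_log.const_mul 2
  -- The convention `Real.log 0 = 0` supplies the continuous extension of the derivative to `0`.
  refine hasDerivAt_of_hasDerivAt_of_ne' (x := 0)
    (g := fun t ↦ t * Real.log (t ^ 2) + t) (fun t ht ↦ ?_) ?_ (by fun_prop) s
  · have hsq : HasDerivAt (fun t : ℝ ↦ t ^ 2) (2 * t) t := by simpa using hasDerivAt_pow 2 t
    refine ((hsq.const_mul (1 / 2)).mul (hsq.log (pow_ne_zero 2 ht))).congr_deriv ?_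
    field_simp
  · have hprod : Continuous fun t : ℝ ↦ 1 / 2 * t * (t * Real.log (t ^ 2)) := by fun_prop
    exact (hprod.congr fun t ↦ by ring).continuousAt

lemma hasDerivAt_half_sq_mul_log_sq_div_sq {δ : ℝ} (hδ : δ ≠ 0) (s : ℝ) :
    HasDerivAt (fun t ↦ 1 / 2 * t ^ 2 * Real.log (t ^ 2 / δ ^ 2))
      (s * Real.log (s ^ 2 / δ ^ 2) + s) s := by
  have hscale := ((hasDerivAt_half_sq_mul_log_sq (s / δ)).comp s
    ((hasDerivAt_id s).div_const δ)).const_mul (δ ^ 2)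
  refine (hscale.congr_of_eventuallyEq (.of_forall fun t ↦ ?_)).congr_deriv ?_
  · simp only [Function.comp_apply, id, div_pow]
    field_simp
  · rw [div_pow]
    field_simp

/-- The expression defining `F2 δ s` for `δ < |s|`, considered for all `s`. -/
noncomputable def F2Outer (δ s : ℝ) : ℝ :=
  1 / 2 * s ^ 2 * Real.log (s ^ 2 / δ ^ 2) + 2 * δ * |s| - 3 / 2 * s ^ 2 - 1 / 2 * δ ^ 2

/-- The derivative of `F2 δ` for `0 < δ`. Both branches vanish at the gluing points `|s| = δ`, so
it does not matter which one is used there. -/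
noncomputable def F2Deriv (δ s : ℝ) : ℝ :=
  if |s| ≤ δ then 0 else s * Real.log (s ^ 2 / δ ^ 2) + 2 * (δ * SignType.sign s - s)

lemma hasDerivAt_F2Outer {δ s : ℝ} (hδ : δ ≠ 0) (hs : s ≠ 0) :
    HasDerivAt (F2Outer δ) (s * Real.log (s ^ 2 / δ ^ 2) + 2 * (δ * SignType.sign s - s)) s := by
  have hsq : HasDerivAt (fun t : ℝ ↦ t ^ 2) (2 * s) s := by simpa using hasDerivAt_pow 2 s
  exact ((((hasDerivAt_half_sq_mul_log_sq_div_sq hδ s).add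
    ((hasDerivAt_abs hs).const_mul (2 * δ))).sub (hsq.const_mul (3 / 2))).sub_const
      (1 / 2 * δ ^ 2)).congr_deriv (by ring)

lemma F2Outer_eq_zero_of_abs_eq {δ s : ℝ} (h : |s| = δ) : F2Outer δ s = 0 := by
  rw [F2Outer, ← h, sq_abs, Real.log_div_self, ← sq_abs s]
  ring

lemma hasDerivAt_F2Outer_of_abs_eq {δ s : ℝ} (hδ : 0 < δ) (h : |s| = δ) :
    HasDerivAt (F2Outer δ) 0 s := by
  have hs : s ≠ 0 := abs_pos.mp (h ▸ hδ)
  refine (hasDerivAt_F2Outer hδ.ne' hs).congr_deriv ?_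
  rw [← h, sq_abs, Real.log_div_self, abs_mul_sign]
  ring

lemma hasDerivAt_F2 {δ : ℝ} (hδ : 0 < δ) (s : ℝ) :
    HasDerivAt (F2 δ) (F2Deriv δ s) s := by
  rcases lt_trichotomy |s| δ with h | h | h
  · rw [F2Deriv, if_pos h.le]
    refine (hasDerivAt_const s 0).congr_of_eventuallyEq ?_
    filter_upwards [continuous_abs.continuousAt.eventually_lt_const h] with t ht
    exact if_pos ht.le
  · rw [F2Deriv, if_pos h.le]
    exact hasDerivAt_ite (|·| ≤ δ) (hasDerivAt_const s 0) (hasDerivAt_F2Outer_of_abs_eq hδ h)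
      (F2Outer_eq_zero_of_abs_eq h).symm
  · rw [F2Deriv, if_neg h.not_ge]
    have hs : s ≠ 0 := abs_pos.mp (hδ.trans h)
    refine (hasDerivAt_F2Outer hδ.ne' hs).congr_of_eventuallyEq ?_
    filter_upwards [continuous_abs.continuousAt.eventually_const_lt h] with t ht
    exact if_neg ht.not_ge

lemma F2_sub_F1 {δ : ℝ} (hδ : δ ≠ 0) (s : ℝ) :
    F2 δ s - F1 δ s = 1 / 2 * s ^ 2 * Real.log (s ^ 2) := by
  rcases lt_trichotomy |s| δ with h | h | h
  · simp only [F1, F2, if_pos h, if_pos h.le]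
    ring
  · subst h
    simp only [F1, F2, le_refl, lt_irrefl, if_true, if_false, sq_abs, mul_assoc, abs_mul_abs_self]
    ring
  · simp only [F1, F2, if_neg h.not_ge, if_neg h.not_gt]
    rcases eq_or_ne s 0 with rfl | hs
    · simp
    · rw [Real.log_div (pow_ne_zero 2 hs) (pow_ne_zero 2 hδ)]
      ring

lemma hasDerivAt_F1 {δ : ℝ} (hδ : 0 < δ) (s : ℝ) :
    HasDerivAt (F1 δ) (F2Deriv δ s - (s * Real.log (s ^ 2) + s)) s := by
  refine ((hasDerivAt_F2 hδ s).sub (hasDerivAt_half_sq_mul_log_sq s)).congr_of_eventuallyEq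
    (.of_forall fun t ↦ ?_)
  simp only [Pi.sub_apply, ← F2_sub_F1 hδ.ne', sub_sub_cancel]

theorem stmt14 (δ : ℝ) (hδ : 0 < δ) :
    (∀ s : ℝ, s ≠ 0 →
      deriv (F2 δ) s - deriv (F1 δ) s = s * Real.log (s^2) + s) ∧
    deriv (F2 δ) 0 = 0 ∧ deriv (F1 δ) 0 = 0 := by
  have hzero : F2Deriv δ 0 = 0 := if_pos (abs_zero.trans_le hδ.le)
  refine ⟨fun s _ ↦ ?_, ?_, ?_⟩
  · rw [(hasDerivAt_F2 hδ s).deriv, (hasDerivAt_F1 hδ s).deriv, sub_sub_cancel]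
  · rw [(hasDerivAt_F2 hδ 0).deriv, hzero]
  · rw [(hasDerivAt_F1 hδ 0).deriv, hzero, zero_mul, zero_add, sub_zero]
end
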